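/- arXiv:2404.12764 — 2 statements merged into one kernel-verified Lean document; each statement's English description precedes it below -/
import Mathlib

section
/- Let σ̲, σ̄ be real constants with 0 < σ̲ ≤ σ̄, let d ≥ 1 be an integer, and let Γ be a nonempty, bounded, closed, convex subset of the positive semidefinite symmetric d×d real matrices such that for every symmetric d×d real matrix A one has (1/2) sup_{γ ∈ Γ} tr(γ A) = G'(tr A). Then Γ = {ν·I_d : ν ∈ [σ̲², σ̄²]}. -/
/-!
The support function of `Γ` depends on `A` only through `tr A`, and it vanishes when `tr A = 0`.
Applying this to `A` and `-A` shows that every `γ ∈ Γ` is orthogonal to all symmetric traceless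
matrices, hence is a multiple of the identity (`eq_smul_one_of_traceless`).  So `Γ` is the copy of
the closed convex set `S = {ν | ν • 1 ∈ Γ}` of reals.  Testing with `A = ± E₀₀`, whose trace is
`± 1`, gives `sup S = σ̄²` and `inf S = σ̲²`; both are attained because `S` is closed, and convexity
fills in the interval between them.
-/

open Matrix

/-- `G'(x) = (1/2)(σ̄² x⁺ − σ̲² x⁻)` where `x⁺ = max(x,0)`, `x⁻ = max(−x,0)`. -/
noncomputable def Gprime (σl σu : ℝ) (x : ℝ) : ℝ :=
  (1 / 2) * (σu ^ 2 * max x 0 - σl ^ 2 * max (-x) 0)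

/-- The orthogonal complement of the traceless symmetric matrices inside the symmetric matrices is
the line spanned by the identity. -/
theorem eq_smul_one_of_traceless {d : ℕ} (γ : Matrix (Fin d) (Fin d) ℝ) (hγ : γ.IsSymm)
    (h : ∀ A : Matrix (Fin d) (Fin d) ℝ, A.IsSymm → A.trace = 0 → (γ * A).trace = 0)
    (i₀ : Fin d) : γ = γ i₀ i₀ • (1 : Matrix (Fin d) (Fin d) ℝ) := by
  ext i j
  by_cases hij : i = j
  · subst hij
    have h1 := h (single i i 1 - single i₀ i₀ 1)
      (by simp [Matrix.IsSymm, transpose_sub]) (by simp [trace_sub])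
    simp [mul_sub, trace_sub, trace_mul_single] at h1
    simp
    linarith
  · have h1 := h (single i j 1 + single j i 1)
      (by simp [Matrix.IsSymm, transpose_add, add_comm])
      (by simp [trace_add, trace_single_eq_of_ne _ _ _ hij,
        trace_single_eq_of_ne _ _ _ (Ne.symm hij)])
    simp [mul_add, trace_add, trace_mul_single] at h1
    have h2 := hγ.apply i j
    simp [hij]
    linarith

/-- Entrywise boundedness of `Γ` makes each linear functional `γ ↦ tr (γ A)` bounded above on it,
so the suprema in the representation are genuine. -/
theorem bddAbove_trace_mul {d : ℕ} {Γ : Set (Matrix (Fin d) (Fin d) ℝ)}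
    (hbdd : ∃ C : ℝ, ∀ γ ∈ Γ, ∀ i j, |γ i j| ≤ C) (A : Matrix (Fin d) (Fin d) ℝ) :
    BddAbove {x : ℝ | ∃ γ ∈ Γ, x = (γ * A).trace} := by
  obtain ⟨C, hC⟩ := hbdd
  refine ⟨∑ i, ∑ j, C * |A j i|, ?_⟩
  rintro x ⟨γ, hγ, rfl⟩
  simp only [trace, diag_apply, mul_apply]
  refine Finset.sum_le_sum fun i _ => Finset.sum_le_sum fun j _ => ?_
  calc γ i j * A j i ≤ |γ i j * A j i| := le_abs_self _
    _ = |γ i j| * |A j i| := abs_mul _ _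
    _ ≤ C * |A j i| := mul_le_mul_of_nonneg_right (hC γ hγ i j) (abs_nonneg _)

theorem representing_set_is_scalar_matrices (σl σu : ℝ) (hσl : 0 < σl) (hσ : σl ≤ σu)
    (d : ℕ) (hd : 1 ≤ d) (Γ : Set (Matrix (Fin d) (Fin d) ℝ))
    (hne : Γ.Nonempty)
    (hbdd : ∃ C : ℝ, ∀ γ ∈ Γ, ∀ i j, |γ i j| ≤ C)
    (hclosed : IsClosed Γ)
    (hconvex : Convex ℝ Γ)
    (hpsd : ∀ γ ∈ Γ, γ.PosSemidef)
    (hrep : ∀ A : Matrix (Fin d) (Fin d) ℝ, A.IsSymm →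
      (1 / 2) * sSup {x : ℝ | ∃ γ ∈ Γ, x = (γ * A).trace} = Gprime σl σu A.trace) :
    Γ = {γ : Matrix (Fin d) (Fin d) ℝ |
      ∃ ν ∈ Set.Icc (σl ^ 2) (σu ^ 2), γ = ν • (1 : Matrix (Fin d) (Fin d) ℝ)} := by
  have hsup : ∀ A : Matrix (Fin d) (Fin d) ℝ, A.IsSymm →
      sSup {x : ℝ | ∃ γ ∈ Γ, x = (γ * A).trace} = 2 * Gprime σl σu A.trace := fun A hA => by
    linarith [hrep A hA]
  have hle : ∀ A : Matrix (Fin d) (Fin d) ℝ, A.IsSymm → ∀ γ ∈ Γ,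
      (γ * A).trace ≤ 2 * Gprime σl σu A.trace := fun A hA γ hγ => by
    rw [← hsup A hA]
    exact le_csSup (bddAbove_trace_mul hbdd A) ⟨γ, hγ, rfl⟩
  let i₀ : Fin d := ⟨0, hd⟩
  have hscalar : ∀ γ ∈ Γ, γ = γ i₀ i₀ • (1 : Matrix (Fin d) (Fin d) ℝ) := fun γ hγ => by
    refine eq_smul_one_of_traceless γ ?_ (fun A hA htr => ?_) i₀
    · simpa [Matrix.IsHermitian, Matrix.IsSymm] using (hpsd γ hγ).isHermitian
    · have h1 := hle A hA γ hγ
      have h2 := hle (-A) hA.neg γ hγ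
      simp [htr, Gprime] at h1 h2
      linarith
  have hsymm : ∀ c : ℝ, (single i₀ i₀ c : Matrix (Fin d) (Fin d) ℝ).IsSymm := fun c => by
    simp [Matrix.IsSymm]
  -- For `c = ± 1`, the values `tr (γ (c E₀₀))` are exactly the `x` with `(c x) • 1 ∈ Γ`: this
  -- set is closed, so it contains its supremum.
  have hmem : ∀ c : ℝ, c * c = 1 →
      (c * (2 * Gprime σl σu c)) • (1 : Matrix (Fin d) (Fin d) ℝ) ∈ Γ := fun c hc => by
    have hset : {x : ℝ | ∃ γ ∈ Γ, x = (γ * single i₀ i₀ c).trace} =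
        (fun x : ℝ => (c * x) • (1 : Matrix (Fin d) (Fin d) ℝ)) ⁻¹' Γ := by
      ext x
      simp only [Set.mem_ofPred_eq, Set.mem_preimage, trace_mul_single]
      constructor
      · rintro ⟨γ, hγ, rfl⟩
        have : c * (MulOpposite.op c • γ i₀ i₀) = γ i₀ i₀ := by
          simp only [MulOpposite.smul_eq_mul_unop, MulOpposite.unop_op]
          linear_combination γ i₀ i₀ * hc
        rw [this, ← hscalar γ hγ]
        exact hγ
      · intro hx
        refine ⟨_, hx, ?_⟩
        simp
        linear_combination (-x) * hc
    have hcl : IsClosed {x : ℝ | ∃ γ ∈ Γ, x = (γ * single i₀ i₀ c).trace} := by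
      rw [hset]
      exact hclosed.preimage (by fun_prop)
    have hm := hcl.csSup_mem (hne.elim fun γ hγ => ⟨_, γ, hγ, rfl⟩)
      (bddAbove_trace_mul hbdd _)
    rw [hsup _ (hsymm c), hset, trace_single_eq_same] at hm
    exact hm
  have hu : (σu ^ 2) • (1 : Matrix (Fin d) (Fin d) ℝ) ∈ Γ := by
    simpa [Gprime] using hmem 1 (by norm_num)
  have hl : (σl ^ 2) • (1 : Matrix (Fin d) (Fin d) ℝ) ∈ Γ := by
    simpa [Gprime] using hmem (-1) (by norm_num)
  ext γ
  constructor
  · intro hγ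
    refine ⟨γ i₀ i₀, ⟨?_, ?_⟩, hscalar γ hγ⟩
    · simpa [trace_mul_single, Gprime] using hle _ (hsymm (-1)) γ hγ
    · simpa [trace_mul_single, Gprime] using hle _ (hsymm 1) γ hγ
  · rintro ⟨ν, hν, rfl⟩
    have hS : Convex ℝ ((fun x : ℝ => x • (1 : Matrix (Fin d) (Fin d) ℝ)) ⁻¹' Γ) :=
      hconvex.is_linear_preimage ⟨fun x y => add_smul x y _, fun c x => by simp [mul_smul]⟩
    exact hS.ordConnected.out hl hu hν
end

section
/- Let σ̲, σ̄ be real constants with 0 < σ̲ ≤ σ̄, set ρ = σ̲²/(2σ̄²), let d ≥ 1 be an integer, let c ∈ [0, d], let n > 0, let a ∈ ℝ^d, and define v(t,x) = (1+nt)^{−cρ} exp(−n|x−a|²/(2(1+nt)σ̄²)). Then for every t ≥ 0 and x ∈ ℝ^d: (i) ∂_t v(t,x) − G'(Σ_{i=1}^d ∂²_{x_i x_i} v(t,x)) ≥ (nρ(d−c)/(1+nt)) · v(t,x) ≥ 0, so v is a classical supersolution of the nonlinear heat equation ∂_t u = G'(Δu); (ii) v(t,x) ≤ (1+nt)^{−cρ};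 and (iii) v(0,x) = exp(−n|x−a|²/(2σ̄²)). -/
/-!
Put `T = 1 + n t`. Differentiating the Gaussian gives
`∂ₜ v = (σ̄² / 2) A - (κ n / T) v` and `Δ v = A - B`, where
`A = n² |x - a|² / (T² σ̄⁴) · v` and `B = n d / (T σ̄²) · v` are both nonnegative.
Since `σ̲ ≤ σ̄`, the function `G'` is sublinear, whence
`G'(A - B) ≤ (σ̄² / 2) A - (σ̲² / 2) B`. The `A`-terms cancel, and
`(σ̲² / 2) B = n ρ d / T · v` combines with `κ = c ρ` to leave exactly `n ρ (d - c) / T · v`.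
-/

open Real

/-- `v(t,x) = (1+nt)^{−κ} exp(−n|x−a|²/(2(1+nt)σ̄²))` with `|x−a|² = ∑ i, (x i − a i)²`. -/
noncomputable def vfun (d : ℕ) (n σu κ : ℝ) (a : Fin d → ℝ) (t : ℝ) (x : Fin d → ℝ) : ℝ :=
  (1 + n * t) ^ (-κ) *
    Real.exp (-(n * ∑ i, (x i - a i) ^ 2) / (2 * (1 + n * t) * σu ^ 2))

/-- Subadditivity of `G'` applied to `A + (-B)`; this is where `σ̲ ≤ σ̄` enters. -/
lemma Gprime_sub_le {σl σu A B : ℝ} (hσl : 0 < σl) (hσ : σl ≤ σu) (hA : 0 ≤ A) (hB : 0 ≤ B) :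
    Gprime σl σu (A - B) ≤ (1 / 2) * (σu ^ 2 * A - σl ^ 2 * B) := by
  have h2 : σl ^ 2 ≤ σu ^ 2 := by gcongr
  unfold Gprime
  rcases le_total B A with h | h
  · rw [max_eq_left (by linarith), max_eq_right (by linarith)]
    nlinarith
  · rw [max_eq_right (by linarith), max_eq_left (by linarith)]
    nlinarith

lemma vfun_nonneg {d : ℕ} {n σu κ t : ℝ} (a x : Fin d → ℝ) (hT : 0 < 1 + n * t) :
    0 ≤ vfun d n σu κ a t x := by
  unfold vfun
  positivity

lemma hasDerivAt_vfun_time {d : ℕ} {n σu κ t : ℝ} (a x : Fin d → ℝ) (hσu : 0 < σu)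
    (hT : 0 < 1 + n * t) :
    HasDerivAt (fun s => vfun d n σu κ a s x)
      ((n ^ 2 * (∑ i, (x i - a i) ^ 2) / (2 * (1 + n * t) ^ 2 * σu ^ 2) - κ * n / (1 + n * t))
        * vfun d n σu κ a t x) t := by
  unfold vfun
  generalize (∑ i, (x i - a i) ^ 2) = q
  have hlin : HasDerivAt (fun s : ℝ => 1 + n * s) n t := by
    simpa using ((hasDerivAt_id t).const_mul n).const_add 1
  have hpow := hlin.rpow_const (p := -κ) (Or.inl hT.ne')
  have hden : HasDerivAt (fun s : ℝ => 2 * (1 + n * s) * σu ^ 2) (2 * n * σu ^ 2) t :=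
    (hlin.const_mul 2).mul_const _
  have hexp := ((hasDerivAt_const t (-(n * q))).fun_div hden (by positivity)).exp
  refine (hpow.fun_mul hexp).congr_deriv ?_
  rw [Real.rpow_sub_one hT.ne']
  field_simp
  ring

/-- Second derivative of a one-dimensional Gaussian profile; `r` is the contribution of the other
coordinates to `|x - a|²`; for `D = 0` both sides vanish since division by zero is zero. -/
lemma deriv_deriv_gaussian (C n r α D y : ℝ) :
    deriv (deriv (fun s : ℝ => C * Real.exp (-(n * (r + (s - α) ^ 2)) / D))) y
      = (4 * n ^ 2 * (y - α) ^ 2 / D ^ 2 - 2 * n / D)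
        * (C * Real.exp (-(n * (r + (y - α) ^ 2)) / D)) := by
  have h1 : ∀ s : ℝ, HasDerivAt (fun s : ℝ => C * Real.exp (-(n * (r + (s - α) ^ 2)) / D))
      ((-(2 * n / D) * (s - α)) * (C * Real.exp (-(n * (r + (s - α) ^ 2)) / D))) s := by
    intro s
    have hsq := (((hasDerivAt_id' s).sub_const α).fun_pow 2).const_add r
    have h := ((hsq.const_mul n).fun_neg.div_const D).exp.const_mul C
    refine h.congr_deriv ?_
    push_cast
    ring
  have hlin : HasDerivAt (fun s : ℝ => -(2 * n / D) * (s - α)) (-(2 * n / D)) y := by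
    simpa using ((hasDerivAt_id' y).sub_const α).const_mul (-(2 * n / D))
  rw [funext fun s => (h1 s).deriv, (hlin.fun_mul (h1 y)).deriv]
  ring

lemma deriv_deriv_vfun_space {d : ℕ} {n σu κ t : ℝ} (a x : Fin d → ℝ) (i : Fin d) (hσu : 0 < σu)
    (hT : 0 < 1 + n * t) :
    deriv (deriv (fun s => vfun d n σu κ a t (Function.update x i s))) (x i)
      = (n ^ 2 * (x i - a i) ^ 2 / ((1 + n * t) ^ 2 * σu ^ 4) - n / ((1 + n * t) * σu ^ 2))
        * vfun d n σu κ a t x := by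
  have hsum : ∀ s : ℝ, ∑ j, (Function.update x i s j - a j) ^ 2
      = (∑ j ∈ Finset.univ.erase i, (x j - a j) ^ 2) + (s - a i) ^ 2 := by
    intro s
    rw [← Finset.sum_erase_add _ _ (Finset.mem_univ i), Function.update_self]
    congr 1
    refine Finset.sum_congr rfl fun j hj => ?_
    rw [Function.update_of_ne (Finset.ne_of_mem_erase hj)]
  unfold vfun
  simp only [hsum]
  rw [deriv_deriv_gaussian, Finset.sum_erase_add _ _ (Finset.mem_univ i)]
  congr 1
  field_simp
  ring

lemma laplacian_vfun {d : ℕ} {n σu κ t : ℝ} (a x : Fin d → ℝ) (hσu : 0 < σu)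
    (hT : 0 < 1 + n * t) :
    ∑ i, deriv (deriv (fun s => vfun d n σu κ a t (Function.update x i s))) (x i)
      = n ^ 2 * (∑ i, (x i - a i) ^ 2) / ((1 + n * t) ^ 2 * σu ^ 4) * vfun d n σu κ a t x
        - n * d / ((1 + n * t) * σu ^ 2) * vfun d n σu κ a t x := by
  simp only [deriv_deriv_vfun_space a x _ hσu hT]
  rw [← Finset.sum_mul, Finset.sum_sub_distrib, ← Finset.sum_div, ← Finset.mul_sum, sub_mul]
  simp only [Finset.sum_const, Finset.card_univ, Fintype.card_fin, nsmul_eq_mul]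
  ring

theorem vfun_supersolution (σl σu : ℝ) (hσl : 0 < σl) (hσ : σl ≤ σu)
    (d : ℕ) (hd : 1 ≤ d) (c : ℝ) (hc : c ∈ Set.Icc (0 : ℝ) (d : ℝ))
    (n : ℝ) (hn : 0 < n) (a : Fin d → ℝ)
    (t : ℝ) (ht : 0 ≤ t) (x : Fin d → ℝ) :
    (deriv (fun s => vfun d n σu (c * (σl ^ 2 / (2 * σu ^ 2))) a s x) t
        - Gprime σl σu
            (∑ i, deriv (deriv
              (fun s => vfun d n σu (c * (σl ^ 2 / (2 * σu ^ 2))) a t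
                (Function.update x i s))) (x i))
      ≥ (n * (σl ^ 2 / (2 * σu ^ 2)) * ((d : ℝ) - c) / (1 + n * t))
          * vfun d n σu (c * (σl ^ 2 / (2 * σu ^ 2))) a t x) ∧
    (0 ≤ (n * (σl ^ 2 / (2 * σu ^ 2)) * ((d : ℝ) - c) / (1 + n * t))
          * vfun d n σu (c * (σl ^ 2 / (2 * σu ^ 2))) a t x) ∧
    (vfun d n σu (c * (σl ^ 2 / (2 * σu ^ 2))) a t x
      ≤ (1 + n * t) ^ (-(c * (σl ^ 2 / (2 * σu ^ 2))))) ∧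
    (vfun d n σu (c * (σl ^ 2 / (2 * σu ^ 2))) a 0 x
      = Real.exp (-(n * ∑ i, (x i - a i) ^ 2) / (2 * σu ^ 2))) := by
  have hσu : 0 < σu := hσl.trans_le hσ
  have hT : 0 < 1 + n * t := by positivity
  have hdc : 0 ≤ (d : ℝ) - c := sub_nonneg.2 hc.2
  have hv := vfun_nonneg (σu := σu) (κ := c * (σl ^ 2 / (2 * σu ^ 2))) a x hT
  refine ⟨?_, by positivity, ?_, by simp [vfun]⟩
  · rw [(hasDerivAt_vfun_time a x hσu hT).deriv, laplacian_vfun a x hσu hT]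
    generalize vfun d n σu (c * (σl ^ 2 / (2 * σu ^ 2))) a t x = v at hv ⊢
    have hq : 0 ≤ ∑ i, (x i - a i) ^ 2 := by positivity
    generalize (∑ i, (x i - a i) ^ 2) = q at hq ⊢
    have hG := Gprime_sub_le hσl hσ
      (A := n ^ 2 * q / ((1 + n * t) ^ 2 * σu ^ 4) * v)
      (B := n * d / ((1 + n * t) * σu ^ 2) * v) (by positivity) (by positivity)
    refine le_trans (le_of_eq ?_) (sub_le_sub_left hG _)
    field_simp
    ring
  · unfold vfun
    refine mul_le_of_le_one_right (by positivity) (Real.exp_le_one_iff.2 ?_)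
    exact div_nonpos_of_nonpos_of_nonneg (neg_nonpos.2 (by positivity)) (by positivity)
end
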